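/- A graph G admits a c-gel if and only if the line graph L of G admits a good partial orientation all of whose partial dipaths have order at most c. -/

import Mathlib

/-- A walk is *increasing* with respect to an edge-labeling if the sequence of labels of its
edges, traversed from the first endpoint to the last, is non-decreasing. -/
def IsIncreasing {V : Type*} (G : SimpleGraph V) (lab : Sym2 V → ℝ) {x y : V}
    (p : G.Walk x y) : Prop :=
  (p.edges.map lab).Chain' (· ≤ ·)

/-- An edge-labeling is *good* if for every ordered pair `(x, y)` of vertices there do not
exist two distinct increasing paths from `x` to `y`. -/
def IsGoodLabeling {V : Type*} (G : SimpleGraph V) (lab : Sym2 V → ℝ) : Prop :=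
  ∀ (x y : V) (p q : G.Walk x y), p.IsPath → q.IsPath →
    IsIncreasing G lab p → IsIncreasing G lab q → p = q

/-- The line graph of `G`: vertices are the edges of `G`, two distinct edges being adjacent
if and only if they share an endpoint. -/
def LineGraph {V : Type*} (G : SimpleGraph V) : SimpleGraph ↥G.edgeSet :=
  SimpleGraph.fromRel (fun e f => ∃ v : V, v ∈ e.val ∧ v ∈ f.val)

/-- A *partial orientation* of a graph `H`: a set `O` of ordered pairs of vertices such that
every pair in `O` is an edge of `H` and no edge is oriented in both directions. -/
def IsPartialOrientation {α : Type*} (H : SimpleGraph α) (O : Set (α × α)) : Prop :=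
  ∀ p ∈ O, H.Adj p.1 p.2 ∧ (p.2, p.1) ∉ O

/-- `T` is a *source* of the subgraph of `H` induced by `S`, with respect to the restriction
of the partial orientation `O`: no edge inside `T` is oriented, and every edge from `T` to
`S \ T` is oriented away from `T`. -/
def IsSourceIn {α : Type*} (H : SimpleGraph α) (O : Set (α × α)) (S T : Set α) : Prop :=
  T ⊆ S ∧
  (∀ u ∈ T, ∀ v ∈ T, H.Adj u v → (u, v) ∉ O ∧ (v, u) ∉ O) ∧
  (∀ u ∈ T, ∀ v ∈ S, v ∉ T → H.Adj u v → (u, v) ∈ O)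

/-- `T` is a *sink* of the subgraph of `H` induced by `S`, with respect to the restriction
of the partial orientation `O`: no edge inside `T` is oriented, and every edge from `T` to
`S \ T` is oriented towards `T`. -/
def IsSinkIn {α : Type*} (H : SimpleGraph α) (O : Set (α × α)) (S T : Set α) : Prop :=
  T ⊆ S ∧
  (∀ u ∈ T, ∀ v ∈ T, H.Adj u v → (u, v) ∉ O ∧ (v, u) ∉ O) ∧
  (∀ u ∈ T, ∀ v ∈ S, v ∉ T → H.Adj u v → (v, u) ∈ O)

/-- The subgraph of `H` induced by `S` has at least two (nonempty, distinct) sources. -/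
def TwoSourcesIn {α : Type*} (H : SimpleGraph α) (O : Set (α × α)) (S : Set α) : Prop :=
  ∃ T₁ T₂ : Set α, T₁.Nonempty ∧ T₂.Nonempty ∧ T₁ ≠ T₂ ∧
    IsSourceIn H O S T₁ ∧ IsSourceIn H O S T₂

/-- The subgraph of `H` induced by `S` has at least two (nonempty, distinct) sinks. -/
def TwoSinksIn {α : Type*} (H : SimpleGraph α) (O : Set (α × α)) (S : Set α) : Prop :=
  ∃ T₁ T₂ : Set α, T₁.Nonempty ∧ T₂.Nonempty ∧ T₁ ≠ T₂ ∧
    IsSinkIn H O S T₁ ∧ IsSinkIn H O S T₂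

/-- `(H, O)` contains a *partial dicycle*: a cycle of `H` with at least one oriented edge,
all of whose oriented edges go in the same direction in a cyclic ordering of the cycle. -/
def HasPartialDicycle {α : Type*} (H : SimpleGraph α) (O : Set (α × α)) : Prop :=
  ∃ (a : α) (q : H.Walk a a), q.IsCycle ∧
    (∀ d ∈ q.darts, (d.toProd.2, d.toProd.1) ∉ O) ∧
    (∃ d ∈ q.darts, d.toProd ∈ O)

/-- A partial orientation `O` of the line graph of `G` is *good* if it is transitive (no
partial dicycle) and, for every cycle `C` of `G`, the corresponding cycle in the line graph
(the subgraph induced by the edges of `C`) has at least two sources, or at least two sinks,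
with respect to the restriction of `O`. -/
def IsGoodPO {V : Type*} (G : SimpleGraph V) (O : Set (↥G.edgeSet × ↥G.edgeSet)) : Prop :=
  ¬ HasPartialDicycle (LineGraph G) O ∧
  ∀ (v : V) (C : G.Walk v v), C.IsCycle →
    TwoSourcesIn (LineGraph G) O {e : ↥G.edgeSet | e.val ∈ C.edges} ∨
    TwoSinksIn (LineGraph G) O {e : ↥G.edgeSet | e.val ∈ C.edges}

open Classical in
/-- The *order* of a partial dipath, given by its list of darts (as ordered pairs): the
number of its oriented edges plus one. -/
noncomputable def dipathOrder {α : Type*} (O : Set (α × α)) (l : List (α × α)) : ℕ :=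
  l.countP (fun p => decide (p ∈ O)) + 1

open SimpleGraph

/-!
From a good labeling, orient every edge of the line graph towards its larger label. Labels do not
decrease along a partial dipath and strictly increase along its oriented edges, so there is no
partial dicycle and orders are bounded by the number of labels. Remove an edge of minimal label
from a cycle of `G`. If the labels along the remaining path first increase and then decrease,
splitting the path at a maximal edge yields two increasing paths with the same ends. So some label
is smaller than an earlier and a later one, and the minimal edges between these two positions form
a second source, besides the minimal edges of the whole cycle.

From a good partial orientation, label every edge by the maximal order of a partial dipath ending
there. Transitivity makes this label strictly increase along oriented edges. Two distinct
increasing paths with the same ends contain two that form a cycle. Walking back along either of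
them, every source of that cycle contains the smaller of the two initial edges; since the
difference of two sources is a source, there is only one source, and dually only one sink.
-/

/-! ### Sources and sinks -/

section Sources

variable {α β : Type*} {H : SimpleGraph α} {O : Set (α × α)} {S T T₁ T₂ : Set α}

lemma IsSourceIn.diff (h₁ : IsSourceIn H O S T₁) (h₂ : IsSourceIn H O S T₂) :
    IsSourceIn H O S (T₁ \ T₂) := by
  refine ⟨fun u hu => h₁.1 hu.1, fun u hu v hv => h₁.2.1 u hu.1 v hv.1, ?_⟩
  intro u ⟨hu₁, hu₂⟩ v hv hv_notMem huv
  refine h₁.2.2 u hu₁ v hv (fun hv₁ => ?_) huv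
  have hv₂ : v ∈ T₂ := by_contra fun hv₂ => hv_notMem ⟨hv₁, hv₂⟩
  exact (h₁.2.1 u hu₁ v hv₁ huv).2 (h₂.2.2 v hv₂ u (h₁.1 hu₁) hu₂ huv.symm)

-- If `T₁` is not contained in `T₂`, then `T₁ \ T₂` and `T₂` are disjoint nonempty sources.
lemma not_twoSourcesIn_of_forall_mem {e : α}
    (he : ∀ T : Set α, T.Nonempty → IsSourceIn H O S T → e ∈ T) : ¬ TwoSourcesIn H O S := by
  rintro ⟨T₁, T₂, hne₁, hne₂, hne, h₁, h₂⟩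
  have subset_of_source {T T' : Set α} (hT : IsSourceIn H O S T) (hT' : IsSourceIn H O S T')
      (hne : T'.Nonempty) : T ⊆ T' := by
    by_contra hsub
    exact (he _ (Set.sdiff_nonempty.2 hsub) (hT.diff hT')).2 (he T' hne hT')
  exact hne ((subset_of_source h₁ h₂ hne₂).antisymm (subset_of_source h₂ h₁ hne₁))

lemma isSinkIn_iff_isSourceIn_swap :
    IsSinkIn H O S T ↔ IsSourceIn H (Prod.swap ⁻¹' O) S T :=
  and_congr_right fun _ => and_congr_left fun _ =>
    forall₅_congr fun _ _ _ _ _ => and_comm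

lemma twoSinksIn_iff_twoSourcesIn_swap :
    TwoSinksIn H O S ↔ TwoSourcesIn H (Prod.swap ⁻¹' O) S := by
  simp only [TwoSinksIn, TwoSourcesIn, isSinkIn_iff_isSourceIn_swap]

lemma IsSourceIn.mem_of_adj_of_le [Preorder β] {g : α → β} (hT : IsSourceIn H O S T)
    (hg : ∀ p ∈ O, g p.1 < g p.2) {u v : α} (hu : u ∈ T) (hv : v ∈ S) (huv : H.Adj u v)
    (hle : g v ≤ g u) : v ∈ T :=
  by_contra fun hv_notMem => (hg _ (hT.2.2 u hu v hv hv_notMem huv)).not_ge hle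

end Sources

/-! ### Partial diwalks -/

section PartialDiwalks

variable {α : Type*} {H : SimpleGraph α} {O : Set (α × α)} {x y z : α}

/-- The condition on the edges of a partial dipath, stated for arbitrary walks: no edge of the
walk is oriented backwards. -/
def IsPartialDiwalk (O : Set (α × α)) (w : H.Walk x y) : Prop :=
  ∀ d ∈ w.darts, (d.toProd.2, d.toProd.1) ∉ O

lemma IsPartialDiwalk.of_isSubwalk {x' y' : α} {w : H.Walk x y} {w' : H.Walk x' y'}
    (hw : IsPartialDiwalk O w) (hsub : w'.IsSubwalk w) : IsPartialDiwalk O w' :=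
  fun d hd => hw d (hsub.darts_subset hd)

lemma isPartialDiwalk_cons {h : H.Adj x y} {w : H.Walk y z} :
    IsPartialDiwalk O (Walk.cons h w) ↔ (y, x) ∉ O ∧ IsPartialDiwalk O w := by
  simp [IsPartialDiwalk]

lemma isPartialDiwalk_append {w : H.Walk x y} {w' : H.Walk y z} :
    IsPartialDiwalk O (w.append w') ↔ IsPartialDiwalk O w ∧ IsPartialDiwalk O w' := by
  simp [IsPartialDiwalk, or_imp, forall_and]

lemma isPartialDiwalk_concat {w : H.Walk x y} {h : H.Adj y z} :
    IsPartialDiwalk O (w.concat h) ↔ IsPartialDiwalk O w ∧ (z, y) ∉ O := by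
  simp [IsPartialDiwalk, or_imp, forall_and]

lemma dipathOrder_cons_of_mem {p : α × α} {l : List (α × α)} (hp : p ∈ O) :
    dipathOrder O (p :: l) = dipathOrder O l + 1 := by
  simp [dipathOrder, hp]

lemma dipathOrder_cons_of_notMem {p : α × α} {l : List (α × α)} (hp : p ∉ O) :
    dipathOrder O (p :: l) = dipathOrder O l := by
  simp [dipathOrder, hp]

lemma dipathOrder_concat_of_mem {p : α × α} {l : List (α × α)} (hp : p ∈ O) :
    dipathOrder O (l ++ [p]) = dipathOrder O l + 1 := by
  simp [dipathOrder, hp]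

end PartialDiwalks

/-! ### The orientation induced by a labeling -/

section Ascents

variable {α β : Type*} {H : SimpleGraph α} {x y : α}

/-- The partial orientation of `H` induced by a labeling `g` of its vertices: every edge is
oriented towards its larger label, and edges with equal labels are not oriented. -/
def ascents [LT β] (H : SimpleGraph α) (g : α → β) : Set (α × α) :=
  {p | H.Adj p.1 p.2 ∧ g p.1 < g p.2}

lemma isPartialOrientation_ascents [Preorder β] (H : SimpleGraph α) (g : α → β) :
    IsPartialOrientation H (ascents H g) :=
  fun _ hp => ⟨hp.1, fun hp' => hp.2.asymm hp'.2⟩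

lemma isSourceIn_ascents_minimizers [PartialOrder β] {g : α → β} {A S : Set α} {m : β}
    (hAS : A ⊆ S) (hmin : ∀ u ∈ A, m ≤ g u)
    (hclosed : ∀ u ∈ A, g u = m → ∀ v ∈ S, H.Adj u v → v ∈ A) :
    IsSourceIn H (ascents H g) S {u ∈ A | g u = m} := by
  refine ⟨fun u hu => hAS hu.1, ?_, ?_⟩
  · rintro u ⟨-, hu⟩ v ⟨-, hv⟩ -
    exact ⟨fun h => h.2.ne (hu.trans hv.symm), fun h => h.2.ne (hv.trans hu.symm)⟩
  · rintro u ⟨huA, hu⟩ v hvS hv huv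
    have hvA : v ∈ A := hclosed u huA hu v hvS huv
    exact ⟨huv, hu.trans_lt ((hmin v hvA).lt_of_ne' fun h => hv ⟨hvA, h⟩)⟩

variable [LinearOrder β] {g : α → β}

lemma IsPartialDiwalk.le_of_ascents {w : H.Walk x y} (hw : IsPartialDiwalk (ascents H g) w) :
    g x ≤ g y := by
  induction w with
  | nil => exact le_rfl
  | cons h w ih =>
    obtain ⟨hback, htail⟩ := isPartialDiwalk_cons.1 hw
    exact (not_lt.1 fun hlt => hback ⟨h.symm, hlt⟩).trans (ih htail)

lemma not_hasPartialDicycle_ascents (H : SimpleGraph α) (g : α → β) :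
    ¬ HasPartialDicycle H (ascents H g) := by
  rintro ⟨a, q, -, hq, d, hd, hasc⟩
  obtain ⟨p, r, rfl⟩ := (Walk.isSubwalk_toWalk_adj_iff_mem_darts q).2 hd
  obtain ⟨hpd, hr⟩ := isPartialDiwalk_append.1 hq
  have hp : IsPartialDiwalk (ascents H g) p := (isPartialDiwalk_append.1 hpd).1
  exact ((hp.le_of_ascents.trans_lt hasc.2).trans_le hr.le_of_ascents).false

lemma dipathOrder_ascents_le_encard_image_support (w : H.Walk x y)
    (hw : IsPartialDiwalk (ascents H g) w) :
    (dipathOrder (ascents H g) (w.darts.map Dart.toProd) : ℕ∞) ≤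
      (g '' {v | v ∈ w.support}).encard := by
  induction w with
  | nil => simp [dipathOrder]
  | @cons x z y h w ih =>
    have htail : IsPartialDiwalk (ascents H g) w := (isPartialDiwalk_cons.1 hw).2
    have himage : g '' {v | v ∈ (Walk.cons h w).support} =
        insert (g x) (g '' {v | v ∈ w.support}) := by
      simp only [Walk.support_cons, List.mem_cons, Set.ofPred_or, Set.ofPred_eq_eq_singleton,
        Set.singleton_union, Set.image_insert_eq]
    rw [himage, Walk.darts_cons, List.map_cons]
    by_cases hxz : (x, z) ∈ ascents H g
    · have hnew : g x ∉ g '' {v | v ∈ w.support} := by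
        classical
        rintro ⟨v, hv, hgv⟩
        have hzv : g z ≤ g v :=
          (htail.of_isSubwalk (w.isSubwalk_takeUntil hv)).le_of_ascents
        exact (hxz.2.trans_le hzv).ne' hgv
      rw [dipathOrder_cons_of_mem hxz, Set.encard_insert_of_notMem hnew, Nat.cast_add_one]
      gcongr
      exact ih htail
    · rw [dipathOrder_cons_of_notMem hxz]
      exact (ih htail).trans (Set.encard_le_encard (Set.subset_insert _ _))

end Ascents

/-! ### The labeling by maximal orders of partial dipaths -/

section DipathHeight

variable {α : Type*} {H : SimpleGraph α} {O : Set (α × α)} {c : ℕ} {x e f : α}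

/-- All partial dipaths of `(H, O)` have order at most `c`. -/
def DipathOrderLE (H : SimpleGraph α) (O : Set (α × α)) (c : ℕ) : Prop :=
  ∀ (x y : α) (w : H.Walk x y), w.IsPath → IsPartialDiwalk O w →
    dipathOrder O (w.darts.map Dart.toProd) ≤ c

lemma dipathOrderLE_ascents {β : Type*} [LinearOrder β] {g : α → β}
    (hc : (Set.range g).encard ≤ c) : DipathOrderLE H (ascents H g) c := fun _ _ w _ hw =>
  Nat.cast_le.1 <| (dipathOrder_ascents_le_encard_image_support w hw).trans <|
    (Set.encard_le_encard (Set.image_subset_range _ _)).trans hc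

/-- The orders of the partial dipaths of `(H, O)` that end at `e`. -/
def dipathOrdersTo (H : SimpleGraph α) (O : Set (α × α)) (e : α) : Set ℕ :=
  {n | ∃ (x : α) (w : H.Walk x e), w.IsPath ∧ IsPartialDiwalk O w ∧
    dipathOrder O (w.darts.map Dart.toProd) = n}

/-- The maximal order of a partial dipath ending at `e`; it is the label of `e` in the `c`-gel
obtained from a good partial orientation. The value is junk (zero) if these orders are
unbounded. -/
noncomputable def dipathHeight (H : SimpleGraph α) (O : Set (α × α)) (e : α) : ℕ :=
  sSup (dipathOrdersTo H O e)

lemma DipathOrderLE.bddAbove_dipathOrdersTo (hc : DipathOrderLE H O c) (e : α) :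
    BddAbove (dipathOrdersTo H O e) :=
  ⟨c, by rintro _ ⟨x, w, hpath, hw, rfl⟩; exact hc x e w hpath hw⟩

lemma DipathOrderLE.dipathHeight_mem (hc : DipathOrderLE H O c) (e : α) :
    dipathHeight H O e ∈ dipathOrdersTo H O e :=
  Nat.sSup_mem ⟨_, e, .nil, .nil, by simp [IsPartialDiwalk], rfl⟩ (hc.bddAbove_dipathOrdersTo e)

lemma DipathOrderLE.dipathHeight_mem_Icc (hc : DipathOrderLE H O c) (e : α) :
    dipathHeight H O e ∈ Finset.Icc 1 c := by
  obtain ⟨x, w, hpath, hw, horder⟩ := hc.dipathHeight_mem e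
  rw [← horder, Finset.mem_Icc]
  exact ⟨Nat.le_add_left _ _, hc x e w hpath hw⟩

-- Otherwise the arc from `e` to `f` closes a partial dicycle with the part of `w` after `f`.
lemma IsPartialDiwalk.notMem_support_of_mem (hO : IsPartialOrientation H O)
    (hcycle : ¬ HasPartialDicycle H O) {w : H.Walk x e} (hpath : w.IsPath)
    (hw : IsPartialDiwalk O w) (hef : (e, f) ∈ O) : f ∉ w.support := by
  classical
  intro hf
  obtain ⟨hadj, hback⟩ := hO _ hef
  have hdrop : IsPartialDiwalk O (w.dropUntil f hf) := hw.of_isSubwalk (w.isSubwalk_dropUntil hf)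
  have hnew : s(e, f) ∉ (w.dropUntil f hf).edges := by
    intro hmem
    rw [Sym2.eq_swap] at hmem
    have hdart : ⟨(f, e), hadj.symm⟩ ∈ (w.dropUntil f hf).darts := by
      rw [(hpath.dropUntil hf).eq_adj_toWalk_of_mem_edges hmem]
      simp
    exact hdrop _ hdart hef
  exact hcycle ⟨e, .cons hadj (w.dropUntil f hf),
    Walk.cons_isCycle_iff _ _ |>.2 ⟨hpath.dropUntil hf, hnew⟩,
    isPartialDiwalk_cons.2 ⟨hback, hdrop⟩, ⟨(e, f), hadj⟩, by simp, hef⟩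

lemma DipathOrderLE.dipathHeight_lt (hc : DipathOrderLE H O c) (hO : IsPartialOrientation H O)
    (hcycle : ¬ HasPartialDicycle H O) (hef : (e, f) ∈ O) :
    dipathHeight H O e < dipathHeight H O f := by
  obtain ⟨x, w, hpath, hw, horder⟩ := hc.dipathHeight_mem e
  obtain ⟨hadj, hback⟩ := hO _ hef
  have hf : f ∉ w.support := hw.notMem_support_of_mem hO hcycle hpath hef
  refine le_csSup (hc.bddAbove_dipathOrdersTo f) ⟨x, w.concat hadj, hpath.concat hf hadj,
    isPartialDiwalk_concat.2 ⟨hw, hback⟩, ?_⟩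
  rw [Walk.darts_concat, List.concat_eq_append, List.map_append, List.map_singleton,
    dipathOrder_concat_of_mem hef, horder]

end DipathHeight

/-! ### Increasing walks and the line graph -/

section IncreasingWalks

variable {V : Type*} {G : SimpleGraph V} {lab : Sym2 V → ℝ} {u v x y : V}

lemma lineGraph_adj_iff {e f : G.edgeSet} :
    (LineGraph G).Adj e f ↔ e ≠ f ∧ ∃ v, v ∈ e.val ∧ v ∈ f.val := by
  simp only [LineGraph, fromRel_adj, and_comm, or_self]

lemma isIncreasing_iff_pairwise {p : G.Walk x y} :
    IsIncreasing G lab p ↔ (p.edges.map lab).Pairwise (· ≤ ·) :=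
  List.isChain_iff_pairwise

lemma isIncreasing_cons_iff {h : G.Adj u v} {p : G.Walk v x} :
    IsIncreasing G lab (Walk.cons h p) ↔
      (∀ e ∈ p.edges, lab s(u, v) ≤ lab e) ∧ IsIncreasing G lab p := by
  simp [isIncreasing_iff_pairwise]

lemma IsIncreasing.of_isSubwalk {u' v' : V} {p : G.Walk u v} {p' : G.Walk u' v'}
    (hp : IsIncreasing G lab p) (hsub : p'.IsSubwalk p) : IsIncreasing G lab p' :=
  isIncreasing_iff_pairwise.2 <|
    (isIncreasing_iff_pairwise.1 hp).sublist (hsub.edges_isInfix.sublist.map lab)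

lemma isIncreasing_reverse_iff {p : G.Walk x y} :
    IsIncreasing G lab p.reverse ↔ IsIncreasing G (-lab) p := by
  simp only [isIncreasing_iff_pairwise, Walk.edges_reverse, List.pairwise_map,
    List.pairwise_reverse, Pi.neg_apply, neg_le_neg_iff]

end IncreasingWalks

/-! ### From orientations to labelings -/

section OrientationToLabeling

variable {V : Type*} {G : SimpleGraph V} {O : Set (G.edgeSet × G.edgeSet)} {lab : Sym2 V → ℝ}
  {S T : Set G.edgeSet} {u v v' x x' : V}

lemma IsSourceIn.mem_of_common_vertex (hT : IsSourceIn (LineGraph G) O S T)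
    (hlab : ∀ p ∈ O, lab p.1 < lab p.2) {e f : G.edgeSet} (he : e ∈ T) (hf : f ∈ S)
    (hve : v ∈ e.val) (hvf : v ∈ f.val) (hle : lab f ≤ lab e) : f ∈ T := by
  obtain rfl | hef := eq_or_ne e f
  · exact he
  · exact hT.mem_of_adj_of_le (g := G.edgeSet.domRestrict lab) hlab he hf
      (lineGraph_adj_iff.2 ⟨hef, v, hve, hvf⟩) hle

lemma IsSourceIn.head_mem_of_isIncreasing (hT : IsSourceIn (LineGraph G) O S T)
    (hlab : ∀ p ∈ O, lab p.1 < lab p.2) {h : G.Adj u v} {p : G.Walk v x}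
    (hS : ∀ e : G.edgeSet, e.val ∈ (Walk.cons h p).edges → e ∈ S)
    (hp : IsIncreasing G lab (Walk.cons h p)) {e : G.edgeSet} (he : e ∈ T)
    (hep : e.val ∈ (Walk.cons h p).edges) : ⟨s(u, v), h⟩ ∈ T := by
  induction p generalizing u with
  | nil =>
    rw [Walk.edges_cons, Walk.edges_nil, List.mem_singleton] at hep
    have hhead : e = ⟨s(u, _), G.mem_edgeSet.2 h⟩ := Subtype.ext hep
    exact hhead ▸ he
  | @cons v w x h' p ih =>
    obtain ⟨hle, htail⟩ := isIncreasing_cons_iff.1 hp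
    rcases List.mem_cons.1 hep with hep' | hep'
    · have hhead : e = ⟨s(u, v), G.mem_edgeSet.2 h⟩ := Subtype.ext hep'
      exact hhead ▸ he
    · have hnext : ⟨s(v, w), h'⟩ ∈ T :=
        ih (fun e he => hS e (List.mem_cons_of_mem _ he)) htail hep'
      exact hT.mem_of_common_vertex hlab hnext (hS _ (by simp)) (Sym2.mem_mk_left v w)
        (Sym2.mem_mk_right u v) (hle _ (by simp))

lemma IsSourceIn.head_mem_of_head_le (hlab : ∀ p ∈ O, lab p.1 < lab p.2)
    {h : G.Adj u v} {p : G.Walk v x} {h' : G.Adj u v'} {q : G.Walk v' x'}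
    (hT : IsSourceIn (LineGraph G) O
      {e | e.val ∈ (Walk.cons h p).edges ∨ e.val ∈ (Walk.cons h' q).edges} T)
    (hp : IsIncreasing G lab (Walk.cons h p)) (hq : IsIncreasing G lab (Walk.cons h' q))
    (hle : lab s(u, v) ≤ lab s(u, v')) (hne : T.Nonempty) : ⟨s(u, v), h⟩ ∈ T := by
  obtain ⟨e, he⟩ := hne
  rcases hT.1 he with hep | heq
  · exact hT.head_mem_of_isIncreasing hlab (fun _ => Or.inl) hp he hep
  · exact hT.mem_of_common_vertex hlab
      (hT.head_mem_of_isIncreasing hlab (fun _ => Or.inr) hq he heq) (Or.inl (by simp))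
      (Sym2.mem_mk_left u v') (Sym2.mem_mk_left u v) hle

lemma not_twoSourcesIn_of_isIncreasing (hlab : ∀ p ∈ O, lab p.1 < lab p.2)
    {p : G.Walk u x} {q : G.Walk u x'} (hp_nil : ¬ p.Nil) (hq_nil : ¬ q.Nil)
    (hp : IsIncreasing G lab p) (hq : IsIncreasing G lab q) :
    ¬ TwoSourcesIn (LineGraph G) O {e | e.val ∈ p.edges ∨ e.val ∈ q.edges} := by
  cases p with
  | nil => exact absurd .nil hp_nil
  | @cons _ v _ h p =>
  cases q with
  | nil => exact absurd .nil hq_nil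
  | @cons _ v' _ h' q =>
  rcases le_total (lab s(u, v)) (lab s(u, v')) with hle | hle
  · exact not_twoSourcesIn_of_forall_mem fun T hne hT =>
      hT.head_mem_of_head_le hlab hp hq hle hne
  · simp only [or_comm (a := _ ∈ (Walk.cons h p).edges)]
    exact not_twoSourcesIn_of_forall_mem fun T hne hT =>
      hT.head_mem_of_head_le hlab hq hp hle hne

-- Reversing the orientation, the walks and the order of the labels turns sinks into sources.
lemma not_twoSinksIn_of_isIncreasing (hlab : ∀ p ∈ O, lab p.1 < lab p.2)
    {p : G.Walk x u} {q : G.Walk x' u} (hp_nil : ¬ p.Nil) (hq_nil : ¬ q.Nil)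
    (hp : IsIncreasing G lab p) (hq : IsIncreasing G lab q) :
    ¬ TwoSinksIn (LineGraph G) O {e | e.val ∈ p.edges ∨ e.val ∈ q.edges} := by
  have hrev := not_twoSourcesIn_of_isIncreasing (O := Prod.swap ⁻¹' O) (lab := -lab)
    (p := p.reverse) (q := q.reverse) (fun a ha => neg_lt_neg (hlab _ ha))
    (by simpa using hp_nil) (by simpa using hq_nil)
    (by simpa [isIncreasing_reverse_iff] using hp) (by simpa [isIncreasing_reverse_iff] using hq)
  simpa only [twoSinksIn_iff_twoSourcesIn_swap, Walk.edges_reverse, List.mem_reverse] using hrev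

-- Two distinct increasing paths contain two increasing walks with common ends forming a cycle.
lemma IsGoodPO.isGoodLabeling (hgood : IsGoodPO G O) (hlab : ∀ p ∈ O, lab p.1 < lab p.2) :
    IsGoodLabeling G lab := by
  intro x y p q hp hq hp_inc hq_inc
  by_contra hpq
  obtain ⟨a, b, p', q', hp', hq', hcycle⟩ := hp.exists_isCycle_of_ne hq hpq
  have hab : a ≠ b := by
    rintro rfl
    obtain rfl := Walk.eq_nil_iff_nil.2 (Walk.isPath_iff_nil.1 (Walk.isPath_of_isSubwalk hp' hp))
    obtain rfl := Walk.eq_nil_iff_nil.2 (Walk.isPath_iff_nil.1 (Walk.isPath_of_isSubwalk hq' hq))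
    exact hcycle.ne_nil rfl
  have hp_inc' := hp_inc.of_isSubwalk hp'
  have hq_inc' := hq_inc.of_isSubwalk hq'
  have hext := hgood.2 a _ hcycle
  simp only [Walk.edges_append, Walk.edges_reverse, List.mem_append, List.mem_reverse] at hext
  exact hext.elim
    (not_twoSourcesIn_of_isIncreasing hlab (Walk.not_nil_of_ne hab) (Walk.not_nil_of_ne hab)
      hp_inc' hq_inc')
    (not_twoSinksIn_of_isIncreasing hlab (Walk.not_nil_of_ne hab) (Walk.not_nil_of_ne hab)
      hp_inc' hq_inc')

lemma IsGoodPO.exists_isGoodLabeling {c : ℕ} (hO : IsPartialOrientation (LineGraph G) O)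
    (hgood : IsGoodPO G O) (hc : DipathOrderLE (LineGraph G) O c) :
    ∃ lab : Sym2 V → ℝ, IsGoodLabeling G lab ∧ (lab '' G.edgeSet).encard ≤ c := by
  let lab : Sym2 V → ℝ :=
    Function.extend Subtype.val (fun e => (dipathHeight (LineGraph G) O e : ℝ)) 0
  have hlab (e : G.edgeSet) : lab e = dipathHeight (LineGraph G) O e :=
    Subtype.val_injective.extend_apply _ _ e
  refine ⟨lab, hgood.isGoodLabeling fun p hp => ?_, ?_⟩
  · rw [hlab, hlab, Nat.cast_lt]
    exact hc.dipathHeight_lt hO hgood.1 hp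
  · have himage : lab '' G.edgeSet ⊆ (↑) '' (Finset.Icc 1 c : Set ℕ) := by
      rintro _ ⟨e, he, rfl⟩
      exact ⟨_, hc.dipathHeight_mem_Icc ⟨e, he⟩, (hlab ⟨e, he⟩).symm⟩
    calc (lab '' G.edgeSet).encard
        ≤ ((↑) '' (Finset.Icc 1 c : Set ℕ) : Set ℝ).encard := Set.encard_le_encard himage
      _ ≤ (Finset.Icc 1 c : Set ℕ).encard := Set.encard_image_le _ _
      _ = c := by rw [Set.encard_coe_eq_coe_finsetCard, Nat.card_Icc, Nat.add_sub_cancel]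

end OrientationToLabeling

/-! ### From labelings to orientations -/

section Valleys

variable {β : Type*} [LinearOrder β] {l : ℕ → β} {n : ℕ}

/-- The finite sequence `l 0, …, l (n - 1)` has an entry that is smaller than some earlier and
some later entry. -/
def HasValley (l : ℕ → β) (n : ℕ) : Prop :=
  ∃ i j k, i < j ∧ j < k ∧ k < n ∧ l j < l i ∧ l j < l k

-- The sequence turns at the position of a maximal entry.
lemma exists_monotoneOn_antitoneOn_of_not_hasValley (hn : 0 < n) (hvalley : ¬ HasValley l n) :
    ∃ m < n, MonotoneOn l (Set.Iio m) ∧ AntitoneOn l (Set.Ico m n) := by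
  obtain ⟨m, hm, hmax⟩ := (Finset.range n).exists_max_image l ⟨0, Finset.mem_range.2 hn⟩
  rw [Finset.mem_range] at hm
  replace hmax (i : ℕ) (hi : i < n) : l i ≤ l m := hmax i (Finset.mem_range.2 hi)
  refine ⟨m, hm, fun i hi j hj hij => ?_, fun i hi j hj hij => ?_⟩
  · by_contra! hlt
    exact hvalley ⟨i, j, m, hij.lt_of_ne (by grind), hj, hm, hlt,
      hlt.trans_le (hmax i (hi.trans hm))⟩
  · by_contra! hlt
    have him : l i < l m := hlt.trans_le (hmax j hj.2)
    exact hvalley ⟨m, i, j, hi.1.lt_of_ne (by grind), hij.lt_of_ne (by grind), hj.2, him, hlt⟩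

end Valleys

section CyclesAndEdges

variable {V β : Type*} {G : SimpleGraph V} {u v x : V}

lemma isCycle_append_comm {p : G.Walk u v} {q : G.Walk v u} (hC : (p.append q).IsCycle) :
    (q.append p).IsCycle := by
  obtain ⟨htrail, hne, hsupport⟩ := (Walk.isCycle_def _).1 hC
  refine (Walk.isCycle_def _).2 ⟨?_, ?_, ?_⟩
  · rw [Walk.isTrail_def, Walk.edges_append] at htrail ⊢
    exact List.nodup_append_comm.1 htrail
  · rw [Ne, Walk.eq_nil_iff_nil, Walk.nil_append_iff] at hne ⊢
    exact fun h => hne h.symm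
  · rw [Walk.tail_support_append] at hsupport ⊢
    exact List.nodup_append_comm.1 hsupport

lemma exists_isCycle_cons_minimal_head [LinearOrder β] (f : Sym2 V → β) {C : G.Walk x x}
    (hC : C.IsCycle) :
    ∃ (u v : V) (h : G.Adj u v) (w : G.Walk v u), (Walk.cons h w).IsCycle ∧
      (∀ e, e ∈ (Walk.cons h w).edges ↔ e ∈ C.edges) ∧
      ∀ e ∈ (Walk.cons h w).edges, f s(u, v) ≤ f e := by
  classical
  obtain ⟨d, hd, hmin⟩ := C.darts.toFinset.exists_min_image (fun d => f d.edge)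
    ⟨_, List.mem_toFinset.2 (Walk.firstDart_mem_darts hC.not_nil)⟩
  rw [List.mem_toFinset] at hd
  obtain ⟨p, q, hpq⟩ := (Walk.isSubwalk_toWalk_adj_iff_mem_darts C).2 hd
  have hedges (e : Sym2 V) : e ∈ (Walk.cons d.adj (q.append p)).edges ↔ e ∈ C.edges := by
    simp only [hpq, Walk.edges_cons, Walk.edges_append, Walk.edges_nil, List.mem_cons,
      List.mem_append, List.not_mem_nil]
    tauto
  refine ⟨d.fst, d.snd, d.adj, q.append p, ?_, hedges, fun e he => ?_⟩
  · rw [hpq, ← Walk.append_assoc] at hC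
    simpa using isCycle_append_comm hC
  · obtain ⟨d', hd', rfl⟩ := List.mem_map.1 ((hedges e).1 he)
    exact hmin d' (List.mem_toFinset.2 hd')

lemma mem_edges_iff_exists_getVert {w : G.Walk u v} {e : Sym2 V} :
    e ∈ w.edges ↔ ∃ i < w.length, s(w.getVert i, w.getVert (i + 1)) = e := by
  induction e with | _ x y => exact w.mk_mem_edges_iff_exists

lemma exists_index_of_common_vertex_of_isCycle_cons {h : G.Adj u v} {w : G.Walk v u}
    (hC : (Walk.cons h w).IsCycle) {i : ℕ} (hi : 0 < i) (hi' : i + 1 < w.length) {e : Sym2 V}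
    (he : e ∈ (Walk.cons h w).edges) (hxe : x ∈ e)
    (hx : x ∈ s(w.getVert i, w.getVert (i + 1))) :
    ∃ j ∈ Set.Icc (i - 1) (i + 1), s(w.getVert j, w.getVert (j + 1)) = e := by
  have hw : w.IsPath := ((Walk.cons_isCycle_iff _ _).1 hC).1
  have hinj {a b : ℕ} (ha : a ≤ w.length) (hb : b ≤ w.length) :
      w.getVert a = w.getVert b → a = b := hw.getVert_injOn.eq_iff ha hb |>.1
  obtain ⟨a, ha, rfl⟩ : ∃ a ∈ Set.Icc i (i + 1), w.getVert a = x := by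
    rcases Sym2.mem_iff.1 hx with rfl | rfl
    · exact ⟨i, by simp, rfl⟩
    · exact ⟨i + 1, by simp, rfl⟩
  rw [Set.mem_Icc] at ha
  rcases List.mem_cons.1 he with rfl | he
  · exfalso
    rcases Sym2.mem_iff.1 hxe with hend | hstart
    · have := (hw.getVert_eq_end_iff (by omega)).1 hend
      omega
    · have := (hw.getVert_eq_start_iff (by omega)).1 hstart
      omega
  · obtain ⟨j, hj, rfl⟩ := mem_edges_iff_exists_getVert.1 he
    refine ⟨j, Set.mem_Icc.2 ?_, rfl⟩
    rcases Sym2.mem_iff.1 hxe with hleft | hright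
    · have := hinj (by omega) (by omega) hleft
      omega
    · have := hinj (by omega) (by omega) hright
      omega

end CyclesAndEdges

section LabelingToOrientation

variable {V : Type*} {G : SimpleGraph V} {lab : Sym2 V → ℝ} {u v x : V}

/-- The sequence of labels of the edges of a walk `w`; only the entries below `w.length` are
meaningful. -/
def edgeLabels (lab : Sym2 V → ℝ) (w : G.Walk u v) (i : ℕ) : ℝ :=
  lab s(w.getVert i, w.getVert (i + 1))

lemma map_edges_eq_map_range (lab : Sym2 V → ℝ) (w : G.Walk u v) :
    w.edges.map lab = (List.range w.length).map (edgeLabels lab w) :=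
  List.ext_getElem (by simp) fun i _ _ => by simp [edgeLabels, Walk.getElem_edges]

lemma isIncreasing_take_of_monotoneOn {w : G.Walk u v} {m : ℕ}
    (hmono : MonotoneOn (edgeLabels lab w) (Set.Iio m)) : IsIncreasing G lab (w.take m) := by
  rw [isIncreasing_iff_pairwise, Walk.edges_take, List.map_take, map_edges_eq_map_range,
    List.pairwise_iff_getElem]
  intro i j hi hj hij
  simp only [List.length_take, List.length_map, List.length_range, lt_inf_iff] at hi hj
  simpa using hmono hi.1 hj.1 hij.le

lemma isIncreasing_reverse_drop_of_antitoneOn {w : G.Walk u v} {m : ℕ}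
    (hanti : AntitoneOn (edgeLabels lab w) (Set.Ico m w.length)) :
    IsIncreasing G lab (w.drop m).reverse := by
  rw [isIncreasing_iff_pairwise, Walk.edges_reverse, List.map_reverse, List.pairwise_reverse,
    Walk.edges_drop, List.map_drop, map_edges_eq_map_range, List.pairwise_iff_getElem]
  intro i j hi hj hij
  simp only [List.length_drop, List.length_map, List.length_range] at hi hj
  simpa using hanti (a := m + i) (b := m + j) (by grind) (by grind) (by omega)

-- Otherwise `u` and the start of a maximal edge of `w` are joined by two increasing paths: one
-- starts with the minimal edge `uv`, the other traverses the rest of the cycle backwards.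
lemma IsGoodLabeling.hasValley (hgood : IsGoodLabeling G lab) {h : G.Adj u v} {w : G.Walk v u}
    (hC : (Walk.cons h w).IsCycle) (hmin : ∀ e ∈ (Walk.cons h w).edges, lab s(u, v) ≤ lab e) :
    HasValley (edgeLabels lab w) w.length := by
  obtain ⟨hw, hnew⟩ := (Walk.cons_isCycle_iff _ _).1 hC
  have hlength : 0 < w.length := by
    have := hC.three_le_length
    rw [Walk.length_cons] at this
    omega
  by_contra hvalley
  obtain ⟨m, hm, hmono, hanti⟩ := exists_monotoneOn_antitoneOn_of_not_hasValley hlength hvalley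
  have hpath : (Walk.cons h (w.take m)).IsPath :=
    hC.isPath_take (n := m + 1) (by simpa using hm)
  have hinc : IsIncreasing G lab (Walk.cons h (w.take m)) :=
    isIncreasing_cons_iff.2 ⟨fun e he => hmin e <| List.mem_cons_of_mem _ <|
      (w.isSubwalk_take m).edges_subset he, isIncreasing_take_of_monotoneOn hmono⟩
  have heq : Walk.cons h (w.take m) = (w.drop m).reverse :=
    hgood _ _ _ _ hpath (hw.drop m).reverse hinc (isIncreasing_reverse_drop_of_antitoneOn hanti)
  have hmem : s(u, v) ∈ (w.drop m).reverse.edges := by simp [← heq]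
  rw [Walk.edges_reverse, List.mem_reverse] at hmem
  exact hnew ((w.isSubwalk_drop m).edges_subset hmem)

lemma isSourceIn_ascents_valley {h : G.Adj u v} {w : G.Walk v u}
    (hC : (Walk.cons h w).IsCycle) {i k : ℕ} {m : ℝ} (hk : k < w.length)
    (hmin : ∀ s ∈ Set.Icc i k, m ≤ edgeLabels lab w s)
    (hmi : m < edgeLabels lab w i) (hmk : m < edgeLabels lab w k) :
    IsSourceIn (LineGraph G) (ascents (LineGraph G) (G.edgeSet.domRestrict lab))
      {e | e.val ∈ (Walk.cons h w).edges}
      {e ∈ {e : G.edgeSet | ∃ s ∈ Set.Icc i k, s(w.getVert s, w.getVert (s + 1)) = e.val} |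
        lab e = m} := by
  refine isSourceIn_ascents_minimizers ?_ ?_ ?_
  · rintro e ⟨s, hs, hse⟩
    exact List.mem_cons_of_mem _ (mem_edges_iff_exists_getVert.2 ⟨s, hs.2.trans_lt hk, hse⟩)
  · rintro ⟨_, _⟩ ⟨s, hs, rfl⟩
    exact hmin s hs
  · rintro ⟨_, _⟩ ⟨s, ⟨his, hsk⟩, rfl⟩ hlab f hf hadj
    replace hlab : edgeLabels lab w s = m := hlab
    have hsi : s ≠ i := by rintro rfl; exact hmi.ne' hlab
    have hsk' : s ≠ k := by rintro rfl; exact hmk.ne' hlab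
    obtain ⟨-, x, hxe, hxf⟩ := lineGraph_adj_iff.1 hadj
    obtain ⟨r, ⟨hr, hr'⟩, hrf⟩ := exists_index_of_common_vertex_of_isCycle_cons hC
      (by omega) (by omega) hf hxf hxe
    exact ⟨r, ⟨by omega, by omega⟩, hrf⟩

-- One source consists of the minimal edges of the cycle, the other one of the minimal edges of
-- the valley.
lemma twoSourcesIn_of_hasValley {h : G.Adj u v} {w : G.Walk v u}
    (hC : (Walk.cons h w).IsCycle) (hmin : ∀ e ∈ (Walk.cons h w).edges, lab s(u, v) ≤ lab e)
    (hvalley : HasValley (edgeLabels lab w) w.length) :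
    TwoSourcesIn (LineGraph G) (ascents (LineGraph G) (G.edgeSet.domRestrict lab))
      {e | e.val ∈ (Walk.cons h w).edges} := by
  obtain ⟨i, j, k, hij, hjk, hk, hji, hjk_lt⟩ := hvalley
  obtain ⟨t, ht, htmin⟩ := (Finset.Icc i k).exists_min_image (edgeLabels lab w)
    ⟨j, Finset.mem_Icc.2 ⟨hij.le, hjk.le⟩⟩
  simp only [Finset.mem_Icc] at ht htmin
  have htj : edgeLabels lab w t ≤ edgeLabels lab w j := htmin j ⟨hij.le, hjk.le⟩
  have hminima : IsSourceIn (LineGraph G) (ascents (LineGraph G) (G.edgeSet.domRestrict lab))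
      {e | e.val ∈ (Walk.cons h w).edges}
      {e ∈ {e : G.edgeSet | e.val ∈ (Walk.cons h w).edges} | lab e = lab s(u, v)} :=
    isSourceIn_ascents_minimizers subset_rfl (fun e he => hmin e he) fun _ _ _ _ hf _ => hf
  have hhead : (⟨s(u, v), h⟩ : G.edgeSet) ∈
      {e ∈ {e : G.edgeSet | e.val ∈ (Walk.cons h w).edges} | lab e = lab s(u, v)} :=
    ⟨by simp, rfl⟩
  have hbottom := isSourceIn_ascents_valley hC hk htmin (htj.trans_lt hji) (htj.trans_lt hjk_lt)
  refine ⟨_, _, ⟨_, hhead⟩, ?_, ?_, hminima, hbottom⟩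
  · exact ⟨⟨_, w.adj_getVert_succ (ht.2.trans_lt hk)⟩, ⟨t, ht, rfl⟩, rfl⟩
  · intro heq
    rw [heq] at hhead
    obtain ⟨⟨s, hs, hse⟩, -⟩ := hhead
    exact ((Walk.cons_isCycle_iff _ _).1 hC).2
      (mem_edges_iff_exists_getVert.2 ⟨s, hs.2.trans_lt hk, hse⟩)

lemma IsGoodLabeling.twoSourcesIn (hgood : IsGoodLabeling G lab) {C : G.Walk x x}
    (hC : C.IsCycle) :
    TwoSourcesIn (LineGraph G) (ascents (LineGraph G) (G.edgeSet.domRestrict lab))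
      {e | e.val ∈ C.edges} := by
  obtain ⟨u, v, h, w, hC', hedges, hmin⟩ := exists_isCycle_cons_minimal_head lab hC
  simp only [← hedges]
  exact twoSourcesIn_of_hasValley hC' hmin (hgood.hasValley hC' hmin)

lemma IsGoodLabeling.isGoodPO_ascents (hgood : IsGoodLabeling G lab) :
    IsGoodPO G (ascents (LineGraph G) (G.edgeSet.domRestrict lab)) :=
  ⟨not_hasPartialDicycle_ascents _ _, fun _ _ hC => Or.inl (hgood.twoSourcesIn hC)⟩

end LabelingToOrientation

theorem cgel_iff_good_partial_orientation_general {V : Type*} (G : SimpleGraph V) (c : ℕ) :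
    (∃ lab : Sym2 V → ℝ, IsGoodLabeling G lab ∧ (lab '' G.edgeSet).encard ≤ c) ↔
    (∃ O : Set (G.edgeSet × G.edgeSet),
      IsPartialOrientation (LineGraph G) O ∧ IsGoodPO G O ∧ DipathOrderLE (LineGraph G) O c) := by
  constructor
  · rintro ⟨lab, hgood, hc⟩
    rw [← Set.range_domRestrict] at hc
    exact ⟨ascents (LineGraph G) (G.edgeSet.domRestrict lab), isPartialOrientation_ascents _ _,
      hgood.isGoodPO_ascents, dipathOrderLE_ascents hc⟩
  · rintro ⟨O, hO, hgood, hc⟩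
    exact hgood.exists_isGoodLabeling hO hc

/-- A graph `G` admits a `c`-gel (a good edge-labeling with at most `c` distinct values) if
and only if its line graph admits a good partial orientation all of whose partial dipaths
(paths each of whose edges is unoriented or oriented forwards) have order at most `c`. -/
theorem cgel_iff_good_partial_orientation {V : Type*} [Fintype V] (G : SimpleGraph V)
    (c : ℕ) :
    (∃ lab : Sym2 V → ℝ, IsGoodLabeling G lab ∧ (lab '' G.edgeSet).ncard ≤ c) ↔
    (∃ O : Set (↥G.edgeSet × ↥G.edgeSet),
      IsPartialOrientation (LineGraph G) O ∧ IsGoodPO G O ∧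
      ∀ (x y : ↥G.edgeSet) (w : (LineGraph G).Walk x y), w.IsPath →
        (∀ d ∈ w.darts, (d.toProd.2, d.toProd.1) ∉ O) →
        dipathOrder O (w.darts.map SimpleGraph.Dart.toProd) ≤ c) := by
  simpa only [← Set.Finite.cast_ncard_eq (Set.toFinite _), Nat.cast_le, DipathOrderLE,
    IsPartialDiwalk] using cgel_iff_good_partial_orientation_general G c
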